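/- arXiv:2604.13913 — 2 statements merged into one kernel-verified Lean document; each statement's English description precedes it below -/
import Mathlib

section
/- Let c ≠ 0 and r ∈ ℝ, and let θ be a uniform random variable on [0,1]. Then the real random variable Z = c·sin(r + 2πθ) has a probability density function with respect to Lebesgue measure given by h(z) = 1/(π√(c² − z²)) for |z| < |c| and h(z) = 0 for |z| ≥ |c|. -/
open MeasureTheory

/-!
The law of a periodic function of a uniform phase does not see the phase shift, so `θ ↦ r + 2πθ` may
be replaced by a uniform variable on `(-π/2, 3π/2]`. There `sin` is symmetric about `π/2`, which
reduces the claim to `(-π/2, π/2)`; on that interval `x ↦ c sin x` is a diffeomorphism onto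
`(-|c|, |c|)` whose derivative has absolute value `|c| cos x = √(c² - (c sin x)²)`.
-/

open Real Set
open scoped ENNReal Pointwise

section ChangeOfVariables

theorem map_withDensity_restrict_of_abs_det_fderiv_mul_eq {E : Type*} [NormedAddCommGroup E]
    [NormedSpace ℝ E] [FiniteDimensional ℝ E] [MeasurableSpace E] [BorelSpace E]
    (μ : Measure E) [μ.IsAddHaarMeasure] {f : E → E} {f' : E → E →L[ℝ] E} {s : Set E}
    {p q : E → ℝ≥0∞} (hs : MeasurableSet s) (hf' : ∀ x ∈ s, HasFDerivWithinAt f (f' x) s x)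
    (hf : InjOn f s) (hpq : ∀ x ∈ s, ENNReal.ofReal |(f' x).det| * q (f x) = p x) :
    ((μ.restrict s).withDensity p).map f = (μ.restrict (f '' s)).withDensity q := by
  have hfm : AEMeasurable f (μ.restrict s) :=
    ContinuousOn.aemeasurable (fun x hx => (hf' x hx).continuousWithinAt) hs
  ext A hA
  rw [Measure.map_apply_of_aemeasurable (hfm.mono_ac (withDensity_absolutelyContinuous _ _)) hA,
    withDensity_apply', withDensity_apply _ hA, ← lintegral_indicator₀ (hfm.nullMeasurable hA),
    ← lintegral_indicator hA, lintegral_image_eq_lintegral_abs_det_fderiv_mul μ hs hf' hf]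
  refine setLIntegral_congr_fun hs fun x hx => ?_
  by_cases hxA : f x ∈ A <;> simp [hxA, hpq x hx]

theorem map_withDensity_restrict_of_abs_deriv_mul_eq {f f' : ℝ → ℝ} {s : Set ℝ} {p q : ℝ → ℝ≥0∞}
    (hs : MeasurableSet s) (hf' : ∀ x ∈ s, HasDerivWithinAt f (f' x) s x) (hf : InjOn f s)
    (hpq : ∀ x ∈ s, ENNReal.ofReal |f' x| * q (f x) = p x) :
    ((volume.restrict s).withDensity p).map f = (volume.restrict (f '' s)).withDensity q :=
  map_withDensity_restrict_of_abs_det_fderiv_mul_eq volume hs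
    (fun x hx => (hf' x hx).hasFDerivWithinAt) hf (by simpa using hpq)

theorem map_const_add_mul_restrict_Ioc (a : ℝ) {k : ℝ} (hk : 0 < k) (u v : ℝ) :
    (volume.restrict (Ioc u v)).map (fun x => a + k * x) =
      ENNReal.ofReal k⁻¹ • volume.restrict (Ioc (a + k * u) (a + k * v)) := by
  have hpre : Ioc u v = (fun x => a + k * x) ⁻¹' Ioc (a + k * u) (a + k * v) := by
    ext x
    simp [hk]
  have hvol : (volume : Measure ℝ).map (fun x => a + k * x) = ENNReal.ofReal k⁻¹ • volume := by
    change volume.map ((a + ·) ∘ (k * ·)) = _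
    rw [← Measure.map_map (measurable_const_add a) (measurable_const_mul k),
      Real.map_volume_mul_left hk.ne', Measure.map_smul, map_add_left_eq_self,
      abs_of_pos (inv_pos.mpr hk)]
  rw [hpre, ← Measure.restrict_map (by fun_prop) measurableSet_Ioc, hvol, Measure.restrict_smul]

end ChangeOfVariables

section Symmetry

variable {β : Type*} [MeasurableSpace β] {f : ℝ → β}

theorem map_restrict_Ioc_eq_of_periodic {T : ℝ} (hfm : Measurable f) (hf : Function.Periodic f T)
    (hT : 0 < T) (a b : ℝ) :
    (volume.restrict (Ioc a (a + T))).map f = (volume.restrict (Ioc b (b + T))).map f := by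
  ext A hA
  simp only [Measure.map_apply hfm hA, Measure.restrict_apply (hfm hA)]
  refine (isAddFundamentalDomain_Ioc hT a).measure_set_eq (isAddFundamentalDomain_Ioc hT b)
    (hfm hA) ?_
  rintro ⟨_, n, rfl⟩
  ext x
  simp [AddSubgroup.vadd_def, add_comm, hf.int_mul n x]

theorem map_uniform_phase_of_periodic {T : ℝ} (hfm : Measurable f) (hf : Function.Periodic f T)
    (hT : 0 < T) (r a : ℝ) :
    (volume.restrict (Icc (0 : ℝ) 1)).map (fun θ => f (r + T * θ)) =
      ENNReal.ofReal T⁻¹ • (volume.restrict (Ioc a (a + T))).map f := by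
  change (volume.restrict (Icc (0 : ℝ) 1)).map (f ∘ fun θ => r + T * θ) = _
  rw [← Measure.map_map hfm (by fun_prop),
    ← restrict_Ioc_eq_restrict_Icc, map_const_add_mul_restrict_Ioc r hT, Measure.map_smul,
    mul_zero, add_zero, mul_one, map_restrict_Ioc_eq_of_periodic hfm hf hT r a]

theorem map_restrict_Ioc_eq_two_smul_of_symm {m : ℝ} (hfm : Measurable f)
    (hf : ∀ x, f (2 * m - x) = f x) {l : ℝ} (hl : 0 ≤ l) :
    (volume.restrict (Ioc (m - l) (m + l))).map f =
      (2 : ℝ≥0∞) • (volume.restrict (Ioo (m - l) m)).map f := by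
  have hreflect : (volume.restrict (Ioo m (m + l))).map f =
      (volume.restrict (Ioo (m - l) m)).map f := by
    have hpre : (fun x => 2 * m - x) ⁻¹' Ioo (m - l) m = Ioo m (m + l) := by
      rw [preimage_const_sub_Ioo]
      congr 1 <;> ring
    have hpres := (Measure.measurePreserving_sub_left volume (2 * m)).restrict_preimage
      (measurableSet_Ioo (a := m - l) (b := m))
    rw [← hpres.map_eq, hpre, Measure.map_map hfm (by fun_prop)]
    simp only [Function.comp_def, hf]
  rw [← Ioc_union_Ioc_eq_Ioc (sub_le_self m hl) (le_add_of_nonneg_right hl),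
    Measure.restrict_union (Ioc_disjoint_Ioc_of_le le_rfl) measurableSet_Ioc,
    ← restrict_Ioo_eq_restrict_Ioc, ← restrict_Ioo_eq_restrict_Ioc, Measure.map_add _ _ hfm,
    hreflect, two_smul]

end Symmetry

section Arcsine

theorem sin_image_Ioo : sin '' Ioo (-(π / 2)) (π / 2) = Ioo (-1) 1 := by
  refine mapsTo_sin_Ioo.image_subset.antisymm fun y hy => ?_
  exact ⟨arcsin y, ⟨neg_pi_div_two_lt_arcsin.mpr hy.1, arcsin_lt_pi_div_two.mpr hy.2⟩,
    sin_arcsin hy.1.le hy.2.le⟩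

theorem const_mul_sin_image_Ioo {c : ℝ} (hc : c ≠ 0) :
    (fun x => c * sin x) '' Ioo (-(π / 2)) (π / 2) = Ioo (-|c|) |c| := by
  calc (fun x => c * sin x) '' Ioo (-(π / 2)) (π / 2)
      = c • sin '' Ioo (-(π / 2)) (π / 2) := (image_image (c * ·) sin _).symm
    _ = c • Metric.ball (0 : ℝ) 1 := by rw [sin_image_Ioo, Real.ball_eq_Ioo, zero_sub, zero_add]
    _ = Ioo (-|c|) |c| := by
      rw [smul_unitBall hc, Real.ball_eq_Ioo, zero_sub, zero_add, Real.norm_eq_abs]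

theorem sqrt_sq_sub_const_mul_sin_sq (c x : ℝ) :
    √(c ^ 2 - (c * sin x) ^ 2) = |c * cos x| := by
  rw [← sqrt_sq_eq_abs]
  congr 1
  linear_combination -c ^ 2 * sin_sq_add_cos_sq x

/-- The density of the arcsine law on `(-|c|, |c|)`, the law of `c sin X` for `X` uniform on
`(-π/2, π/2)`; it takes values in `ℝ≥0∞` so that it can be passed to `Measure.withDensity`. -/
noncomputable def arcsinePDF (c z : ℝ) : ℝ≥0∞ :=
  ENNReal.ofReal (if |z| < |c| then 1 / (π * √(c ^ 2 - z ^ 2)) else 0)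

theorem withDensity_arcsinePDF (c : ℝ) :
    volume.withDensity (arcsinePDF c) = (volume.restrict (Ioo (-|c|) |c|)).withDensity
      fun z => ENNReal.ofReal (1 / (π * √(c ^ 2 - z ^ 2))) := by
  rw [← withDensity_indicator measurableSet_Ioo]
  congr 1 with z
  by_cases hz : |z| < |c| <;> simp [arcsinePDF, indicator, ← abs_lt, hz]

theorem map_const_mul_sin_restrict_Ioo {c : ℝ} (hc : c ≠ 0) :
    ENNReal.ofReal π⁻¹ • (volume.restrict (Ioo (-(π / 2)) (π / 2))).map (fun x => c * sin x) =
      volume.withDensity (arcsinePDF c) := by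
  rw [← Measure.map_smul, ← withDensity_const, withDensity_arcsinePDF, ← const_mul_sin_image_Ioo hc]
  refine map_withDensity_restrict_of_abs_deriv_mul_eq measurableSet_Ioo
    (fun x _ => ((hasDerivAt_sin x).const_mul c).hasDerivWithinAt) ?_ fun x hx => ?_
  · exact (mul_right_injective₀ hc).comp_injOn (injOn_sin.mono Ioo_subset_Icc_self)
  · have hcos : 0 < cos x := cos_pos_of_mem_Ioo hx
    rw [sqrt_sq_sub_const_mul_sin_sq, ← ENNReal.ofReal_mul (abs_nonneg _)]
    congr 1
    field_simp

end Arcsine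

/-- if `θ` is uniform on `[0,1]`, the law of `Z = c sin(r + 2πθ)` has
density `z ↦ 1/(π√(c² - z²))` on `|z| < |c|` (and `0` elsewhere) with respect to
Lebesgue measure. -/
theorem stmt_12 (c r : ℝ) (hc : c ≠ 0) :
    Measure.map (fun θ : ℝ => c * Real.sin (r + 2 * Real.pi * θ))
        (volume.restrict (Set.Icc (0 : ℝ) 1)) =
      volume.withDensity (fun z => ENNReal.ofReal
        (if |z| < |c| then 1 / (Real.pi * Real.sqrt (c ^ 2 - z ^ 2)) else 0)) := by
  change _ = volume.withDensity (arcsinePDF c)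
  have hmeas : Measurable fun x => c * sin x := by fun_prop
  have hperiodic : Function.Periodic (fun x => c * sin x) (2 * π) := fun x => by
    simp only [sin_add_two_pi]
  have hsymm : ∀ x, c * sin (2 * (π / 2) - x) = c * sin x := fun x => by
    rw [mul_div_cancel₀ π two_ne_zero, sin_pi_sub]
  have hscale : ENNReal.ofReal (2 * π)⁻¹ * 2 = ENNReal.ofReal π⁻¹ := by
    rw [← ENNReal.ofReal_ofNat 2, ← ENNReal.ofReal_mul (by positivity)]
    congr 1
    field_simp
  rw [map_uniform_phase_of_periodic hmeas hperiodic two_pi_pos r (π / 2 - π),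
    show π / 2 - π + 2 * π = π / 2 + π by ring,
    map_restrict_Ioc_eq_two_smul_of_symm hmeas hsymm pi_pos.le, smul_smul, hscale,
    show π / 2 - π = -(π / 2) by ring, map_const_mul_sin_restrict_Ioo hc]
end

section
/- Let b > 1 and β ∈ (0, 1/2). Let x, y ∈ [0,1] and let k ≥ 2 be an integer such that 1/(2b^{k+1}) < |x − y| < 1/(2b^k). Then for each n ∈ {k−2, k−1, k}, one has |2 b^{−βn} sin(π bⁿ (y − x))| > 2^{1+β} sin(π/(2b³)) |x − y|^β. -/
/-!
Put `θ = π bⁿ |x - y|`. The bounds on `|x - y|` place `θ` in `(π / (2b³), π / 2]`, where `sin` is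
increasing, so `sin (π / (2b³)) < |sin (π bⁿ (y - x))|`. The upper bound on `θ` also says
`2|x - y| ≤ b⁻ⁿ`, so `(2|x - y|) ^ β ≤ b ^ (-βn)`. Multiplying the two estimates gives the claim.
-/

open Real

theorem sin_lt_abs_sin_of_lt_abs {φ θ : ℝ} (hφ : -(π / 2) ≤ φ) (hφθ : φ < |θ|)
    (hθ : |θ| ≤ π / 2) : sin φ < |sin θ| := by
  rw [abs_sin_eq_sin_abs_of_abs_le_pi (hθ.trans (half_le_self pi_nonneg))]
  exact sin_lt_sin_of_lt_of_le_pi_div_two hφ hθ hφθ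

theorem rpow_le_rpow_neg_of_mul_le_one {s u β : ℝ} (hs : 0 < s) (hu : 0 ≤ u) (hβ : 0 ≤ β)
    (hsu : s * u ≤ 1) : u ^ β ≤ s ^ (-β) := by
  rw [rpow_neg_eq_inv_rpow, inv_eq_one_div]
  exact rpow_le_rpow hu ((le_div_iff₀' hs).2 hsu) hβ

theorem two_rpow_mul_sin_mul_abs_rpow_lt {s t φ β : ℝ} (hs : 0 < s) (hβ : 0 ≤ β) (hφ : 0 ≤ φ)
    (hφt : φ < |π * s * t|) (ht : |π * s * t| ≤ π / 2) :
    2 ^ (1 + β) * sin φ * |t| ^ β < |2 * s ^ (-β) * sin (π * s * t)| := by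
  have habs : |π * s * t| = π * (s * |t|) := by
    rw [abs_mul, abs_of_pos (mul_pos pi_pos hs), mul_assoc]
  have hst : s * (2 * |t|) ≤ 1 := by
    have : s * |t| ≤ 1 / 2 := le_of_mul_le_mul_left (by linarith) pi_pos
    linarith
  have hpow : (2 * |t|) ^ β ≤ s ^ (-β) :=
    rpow_le_rpow_neg_of_mul_le_one hs (by positivity) hβ hst
  have hsin : sin φ < |sin (π * s * t)| :=
    sin_lt_abs_sin_of_lt_abs (by linarith [pi_pos]) hφt ht
  have hsin_nonneg : 0 ≤ sin φ := sin_nonneg_of_nonneg_of_le_pi hφ (by linarith [pi_pos])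
  calc 2 ^ (1 + β) * sin φ * |t| ^ β
      = 2 * (2 * |t|) ^ β * sin φ := by
        rw [rpow_add two_pos, rpow_one, mul_rpow two_pos.le (abs_nonneg t)]
        ring
    _ ≤ 2 * s ^ (-β) * sin φ := by gcongr
    _ < 2 * s ^ (-β) * |sin (π * s * t)| := by gcongr
    _ = |2 * s ^ (-β) * sin (π * s * t)| := by
        rw [abs_mul, abs_of_pos (a := 2 * s ^ (-β)) (by positivity)]

theorem stmt_16_general {b β x y : ℝ} {k m n : ℕ} (hb : 1 < b) (hβ : 0 ≤ β)
    (hlow : 1 / (2 * b ^ (k + 1)) < |x - y|) (hup : |x - y| ≤ 1 / (2 * b ^ k))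
    (hnk : n ≤ k) (hkn : k < n + m) :
    2 ^ (1 + β) * sin (π / (2 * b ^ m)) * |x - y| ^ β <
      |2 * b ^ (-β * (n : ℝ)) * sin (π * b ^ n * (y - x))| := by
  have hb0 : 0 < b := one_pos.trans hb
  have hangle : |π * b ^ n * (y - x)| = π * b ^ n * |x - y| := by
    rw [abs_mul, abs_of_pos (by positivity), abs_sub_comm]
  have hangle_gt : π / (2 * b ^ m) < |π * b ^ n * (y - x)| := by
    calc π / (2 * b ^ m) = π * b ^ n * (1 / (2 * b ^ (n + m))) := by
          rw [pow_add]
          field_simp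
      _ ≤ π * b ^ n * (1 / (2 * b ^ (k + 1))) := by
          gcongr ?_ * (1 / (2 * ?_))
          exact pow_le_pow_right₀ hb.le hkn
      _ < π * b ^ n * |x - y| := by gcongr
      _ = |π * b ^ n * (y - x)| := hangle.symm
  have hangle_le : |π * b ^ n * (y - x)| ≤ π / 2 := by
    calc |π * b ^ n * (y - x)| = π * b ^ n * |x - y| := hangle
      _ ≤ π * b ^ n * (1 / (2 * b ^ k)) := by gcongr
      _ ≤ π * b ^ n * (1 / (2 * b ^ n)) := by
          gcongr
          exact hb.le
      _ = π / 2 := by field_simp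
  rw [mul_comm (-β), rpow_natCast_mul hb0.le, abs_sub_comm x y]
  exact two_rpow_mul_sin_mul_abs_rpow_lt (by positivity) hβ (by positivity) hangle_gt hangle_le

/-- if `k ≥ 2` and `1/(2b^{k+1}) < |x-y| < 1/(2b^k)`, then for each
`n ∈ {k-2, k-1, k}` the amplitude `|2 b^{-βn} sin(π bⁿ(y-x))|` exceeds
`2^{1+β} sin(π/(2b³)) |x-y|^β`. -/
theorem stmt_16 (b β : ℝ) (hb : 1 < b) (hβ : β ∈ Set.Ioo (0 : ℝ) (1 / 2))
    (x y : ℝ) (hx : x ∈ Set.Icc (0 : ℝ) 1) (hy : y ∈ Set.Icc (0 : ℝ) 1)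
    (k : ℕ) (hk : 2 ≤ k)
    (h1 : 1 / (2 * b ^ (k + 1)) < |x - y|) (h2 : |x - y| < 1 / (2 * b ^ k)) :
    ∀ n ∈ ({k - 2, k - 1, k} : Set ℕ),
      2 ^ ((1 : ℝ) + β) * Real.sin (Real.pi / (2 * b ^ 3)) * |x - y| ^ β <
        |2 * b ^ (-β * (n : ℝ)) * Real.sin (Real.pi * b ^ n * (y - x))| := by
  rintro n (rfl | rfl | rfl) <;>
    exact stmt_16_general hb hβ.1.le h1 h2.le (by omega) (by omega)
end
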